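/- Assume Hypothesis (H) and let ε₀ := 1/(2 C_R ‖M‖). Then for every ε ∈ (0, ε₀), the operator B_ε := M + ε⁻¹ A (with domain dom(A)) is boundedly invertible and ‖ B_ε⁻¹ − ι_N B_{ε,N}⁻¹ ι_N* ‖ ≤ 2 C_R (1 + ‖M‖/c)² ε. -/

import Mathlib

/-!
Since `A` is skew, `B = M + ε⁻¹ A` inherits the coercivity of `M`; hence `B` is bounded below and
has closed range, and a vector `x ⊥ ran B` satisfies `ε⁻¹ A x = M* x`, which forces `x = 0`. By the
closed graph theorem `A` is bounded on `N`, so the compression `B_N` of `B` is invertible by the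
same coercivity.

For the estimate let `B x = y` and split `x = n + r` along `N ⊕ Nᗮ`. As `A` respects the splitting,
`r` is controlled by `A r = π_R A x = ε π_R (y - M x)`, which gives the factor `ε`, while the
`N`-component of the equation reads `B_N n = π_N y - π_N M r`. So `B⁻¹ y - B_N⁻¹ π_N y` is
`r - B_N⁻¹ π_N M r`. The parameter enters only through `ε⁻¹ A`, which is again skew-selfadjoint, so
it suffices to treat `M + A`.
-/

open scoped InnerProductSpace ComplexConjugate

section NormedSpace

variable {𝕜 E F : Type*} [NontriviallyNormedField 𝕜] [NormedAddCommGroup E] [NormedSpace 𝕜 E]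
  [NormedAddCommGroup F] [NormedSpace 𝕜 F]

theorem exists_continuous_inverse_of_le_norm {T : E →ₗ[𝕜] F} {c : ℝ} (hc : 0 < c)
    (hT : ∀ x, c * ‖x‖ ≤ ‖T x‖) (hsurj : Function.Surjective T) :
    ∃ S : F →L[𝕜] E, ‖S‖ ≤ c⁻¹ ∧ Function.LeftInverse S T ∧ Function.RightInverse S T := by
  have hinj : Function.Injective T := (injective_iff_map_eq_zero T).2 fun x hx => by
    have := hT x
    rw [hx, norm_zero] at this
    exact norm_le_zero_iff.1 (nonpos_of_mul_nonpos_right this hc)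
  let e := LinearEquiv.ofBijective T ⟨hinj, hsurj⟩
  have bound (y : F) : ‖e.symm y‖ ≤ c⁻¹ * ‖y‖ := by
    rw [le_inv_mul_iff₀ hc]
    exact (hT (e.symm y)).trans_eq (congrArg norm (e.apply_symm_apply y))
  exact ⟨e.symm.toLinearMap.mkContinuous c⁻¹ bound,
    LinearMap.mkContinuous_norm_le _ (inv_nonneg.2 hc.le) _, e.symm_apply_apply, e.apply_symm_apply⟩

theorem isClosed_range_of_isClosed_of_le_norm [CompleteSpace E] [CompleteSpace F]
    {B : E →ₗ.[𝕜] F} (hB : B.IsClosed) {c : ℝ} (hc : 0 < c)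
    (hbelow : ∀ x : B.domain, c * ‖(x : E)‖ ≤ ‖B x‖) :
    IsClosed (B.toFun.range : Set F) := by
  have : CompleteSpace B.graph := _root_.IsClosed.completeSpace_coe (hs := hB)
  let snd : B.graph →L[𝕜] F := (ContinuousLinearMap.snd 𝕜 E F).comp B.graph.subtypeL
  have hsnd : AntilipschitzWith ⟨max c⁻¹ 1, by positivity⟩ snd := by
    refine snd.antilipschitz_of_bound ?_
    rintro ⟨p, hp⟩
    obtain ⟨x, rfl⟩ := B.mem_graph_iff'.1 hp
    refine max_le (le_trans ?_ (mul_le_mul_of_nonneg_right (le_max_left c⁻¹ 1) (norm_nonneg _)))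
      (le_mul_of_one_le_left (norm_nonneg _) (le_max_right c⁻¹ 1))
    exact (le_inv_mul_iff₀ hc).2 (hbelow x)
  have hrange : (B.toFun.range : Set F) = Set.range snd := by
    ext y
    simp [snd, LinearPMap.mem_graph_iff]
  exact hrange ▸ hsnd.isClosed_range snd.uniformContinuous

theorem isClosed_vadd {B : E →ₗ.[𝕜] F} (hB : B.IsClosed) (M : E →L[𝕜] F) :
    ((M : E →ₗ[𝕜] F) +ᵥ B).IsClosed := by
  have hgraph : (((M : E →ₗ[𝕜] F) +ᵥ B).graph : Set (E × F)) =
      (fun p : E × F => (p.1, p.2 - M p.1)) ⁻¹' B.graph := by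
    ext ⟨x, y⟩
    simp [LinearPMap.mem_graph_iff, eq_sub_iff_add_eq']
  rw [LinearPMap.IsClosed, hgraph]
  exact hB.preimage (by fun_prop)

theorem continuous_comp_inclusion_of_isClosed [CompleteSpace F] {B : E →ₗ.[𝕜] F} (hB : B.IsClosed)
    {K : Submodule 𝕜 E} [CompleteSpace K] (hK : K ≤ B.domain) :
    Continuous (B.toFun ∘ₗ Submodule.inclusion hK) := by
  refine LinearMap.continuous_of_isClosed_graph _ ?_
  have hgraph : ((B.toFun ∘ₗ Submodule.inclusion hK).graph : Set (K × F)) =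
      (fun p : K × F => ((p.1 : E), p.2)) ⁻¹' B.graph := by
    ext ⟨x, y⟩
    simp only [SetLike.mem_coe, LinearMap.mem_graph_iff, Set.mem_preimage]
    exact LinearPMap.image_iff (hK x.2)
  rw [hgraph]
  exact hB.preimage (by fun_prop)

end NormedSpace

section InnerProductSpace

variable {𝕜 H : Type*} [RCLike 𝕜] [NormedAddCommGroup H] [InnerProductSpace 𝕜 H]

theorem mul_norm_le_norm_of_mul_sq_le_re_inner {c : ℝ} {x y : H}
    (h : c * ‖x‖ ^ 2 ≤ RCLike.re ⟪y, x⟫_𝕜) : c * ‖x‖ ≤ ‖y‖ := by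
  rcases (norm_nonneg x).eq_or_lt with hx | hx
  · simp [← hx]
  · refine le_of_mul_le_mul_right ?_ hx
    calc c * ‖x‖ * ‖x‖ = c * ‖x‖ ^ 2 := by ring
      _ ≤ RCLike.re ⟪y, x⟫_𝕜 := h
      _ ≤ ‖y‖ * ‖x‖ := re_inner_le_norm y x

theorem adjoint_smul_of_dense_domain {E F : Type*} [NormedAddCommGroup E] [InnerProductSpace 𝕜 E]
    [CompleteSpace E] [NormedAddCommGroup F] [InnerProductSpace 𝕜 F] {A : E →ₗ.[𝕜] F}
    (hA : Dense (A.domain : Set E)) {a : 𝕜} (ha : a ≠ 0) :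
    (a • A).adjoint = conj a • A.adjoint := by
  have conj_smul_le {T : E →ₗ.[𝕜] F} (hT : Dense (T.domain : Set E)) (b : 𝕜) :
      conj b • T.adjoint ≤ (b • T).adjoint :=
    LinearPMap.IsFormalAdjoint.le_adjoint (T := b • T) hT fun x y => by
      rw [LinearPMap.smul_apply, LinearPMap.smul_apply, inner_smul_left, inner_smul_right]
      exact congrArg (conj b * ·) ((LinearPMap.adjoint_isFormalAdjoint hT).symm x y)
  have hdomain : (a • A).adjoint.domain ≤ A.adjoint.domain := by
    have hle := conj_smul_le (T := a • A) hA a⁻¹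
    rw [inv_smul_smul₀ ha] at hle
    exact hle.1
  exact (LinearPMap.eq_of_le_of_domain_eq (conj_smul_le hA a)
    (le_antisymm (conj_smul_le hA a).1 hdomain)).symm

/-- A skew-selfadjoint operator: densely defined with `A* = -A`. Density is recorded because
`LinearPMap.adjoint` takes the value `0` when the domain is not dense. -/
structure IsSkewSelfAdjoint [CompleteSpace H] (A : H →ₗ.[𝕜] H) : Prop where
  dense_domain : Dense (A.domain : Set H)
  adjoint_eq_neg : A.adjoint = -A

namespace IsSkewSelfAdjoint

variable [CompleteSpace H] {A : H →ₗ.[𝕜] H}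

theorem re_inner_apply_self (hA : IsSkewSelfAdjoint A) (x : A.domain) :
    RCLike.re ⟪A x, (x : H)⟫_𝕜 = 0 := by
  have h := LinearPMap.adjoint_isFormalAdjoint hA.dense_domain
  rw [hA.adjoint_eq_neg] at h
  have hskew := congrArg RCLike.re (h x x)
  rw [LinearPMap.neg_apply, inner_neg_left, map_neg, inner_re_symm (x : H)] at hskew
  linarith

theorem mem_graph_of_forall_inner (hA : IsSkewSelfAdjoint A) {x w : H}
    (h : ∀ z : A.domain, ⟪x, A z⟫_𝕜 = -⟪w, (z : H)⟫_𝕜) : (x, w) ∈ A.graph := by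
  have hneg (z : A.domain) : ⟪-w, (z : H)⟫_𝕜 = ⟪x, A z⟫_𝕜 := by rw [h, inner_neg_left]
  have hx : x ∈ A.adjoint.domain := LinearPMap.mem_adjoint_domain_of_exists x ⟨-w, hneg⟩
  have hgraph : (x, -w) ∈ (-A).graph := by
    rw [← hA.adjoint_eq_neg,
      ← LinearPMap.adjoint_apply_eq hA.dense_domain ⟨x, hx⟩ hneg]
    exact A.adjoint.mem_graph ⟨x, hx⟩
  simpa [LinearPMap.mem_graph_iff] using hgraph

theorem isClosed (hA : IsSkewSelfAdjoint A) : A.IsClosed := by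
  have hgraph : (A.graph : Set (H × H)) =
      (fun p : H × H => (p.1, -p.2)) ⁻¹' A.adjoint.graph := by
    rw [hA.adjoint_eq_neg]
    ext ⟨x, y⟩
    simp [LinearPMap.mem_graph_iff]
  rw [LinearPMap.IsClosed, hgraph]
  exact (LinearPMap.adjoint_isClosed hA.dense_domain).preimage (by fun_prop)

theorem ofReal_smul (hA : IsSkewSelfAdjoint A) {t : ℝ} (ht : t ≠ 0) :
    IsSkewSelfAdjoint ((t : 𝕜) • A) where
  dense_domain := hA.dense_domain
  adjoint_eq_neg := by
    rw [adjoint_smul_of_dense_domain hA.dense_domain (by exact_mod_cast ht), RCLike.conj_ofReal,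
      hA.adjoint_eq_neg]
    exact LinearPMap.ext' (smul_neg _ _)

variable {M : H →L[𝕜] H} {c : ℝ}

theorem mul_sq_le_re_inner_vadd (hA : IsSkewSelfAdjoint A)
    (hM : ∀ x, c * ‖x‖ ^ 2 ≤ RCLike.re ⟪M x, x⟫_𝕜) (x : A.domain) :
    c * ‖(x : H)‖ ^ 2 ≤ RCLike.re ⟪((M : H →ₗ[𝕜] H) +ᵥ A) x, (x : H)⟫_𝕜 := by
  rw [LinearPMap.vadd_apply, inner_add_left, map_add, hA.re_inner_apply_self, add_zero]
  exact hM x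

theorem surjective_vadd (hA : IsSkewSelfAdjoint A) (hc : 0 < c)
    (hM : ∀ x, c * ‖x‖ ^ 2 ≤ RCLike.re ⟪M x, x⟫_𝕜) :
    Function.Surjective ((M : H →ₗ[𝕜] H) +ᵥ A) := by
  have hclosed := isClosed_range_of_isClosed_of_le_norm (isClosed_vadd hA.isClosed M) hc
    fun x => mul_norm_le_norm_of_mul_sq_le_re_inner (hA.mul_sq_le_re_inner_vadd hM x)
  refine LinearMap.range_eq_top.1 ?_
  rw [← hclosed.submodule_topologicalClosure_eq, Submodule.topologicalClosure_eq_top_iff,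
    Submodule.eq_bot_iff]
  intro x hx
  have hgraph : (x, M.adjoint x) ∈ A.graph := hA.mem_graph_of_forall_inner fun z => by
    have hz := (Submodule.mem_orthogonal' _ _).1 hx (M z + A z) ⟨z, rfl⟩
    rw [inner_add_right] at hz
    rw [ContinuousLinearMap.adjoint_inner_left]
    exact eq_neg_of_add_eq_zero_right hz
  obtain ⟨x, rfl, hAx⟩ := A.mem_graph_iff.1 hgraph
  have hre : RCLike.re ⟪M x, (x : H)⟫_𝕜 = 0 := by
    rw [← hA.re_inner_apply_self x, hAx, ContinuousLinearMap.adjoint_inner_left, inner_re_symm]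
  have hnorm : c * ‖(x : H)‖ ^ 2 ≤ 0 := hre ▸ hM x
  exact norm_eq_zero.1 (pow_eq_zero_iff two_ne_zero |>.1
    (le_antisymm (nonpos_of_mul_nonpos_right hnorm hc) (by positivity)))

theorem exists_leftInverse_vadd (hA : IsSkewSelfAdjoint A) (hc : 0 < c)
    (hM : ∀ x, c * ‖x‖ ^ 2 ≤ RCLike.re ⟪M x, x⟫_𝕜) :
    ∃ S : H →L[𝕜] H, ∀ x : A.domain, S (((M : H →ₗ[𝕜] H) +ᵥ A) x) = x := by
  obtain ⟨S, -, hS, -⟩ :=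
    exists_continuous_inverse_of_le_norm (T := ((M : H →ₗ[𝕜] H) +ᵥ A).toFun) hc
    (fun x => mul_norm_le_norm_of_mul_sq_le_re_inner (hA.mul_sq_le_re_inner_vadd hM x))
    (hA.surjective_vadd hc hM)
  exact ⟨A.domain.subtypeL.comp S, fun x => congrArg Subtype.val (hS x)⟩

theorem norm_apply_le (hA : IsSkewSelfAdjoint A) (hc : 0 < c)
    (hM : ∀ x, c * ‖x‖ ^ 2 ≤ RCLike.re ⟪M x, x⟫_𝕜) (x : A.domain) :
    ‖A x‖ ≤ (1 + ‖M‖ / c) * ‖((M : H →ₗ[𝕜] H) +ᵥ A) x‖ := by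
  set y := ((M : H →ₗ[𝕜] H) +ᵥ A) x with hy
  have hx : ‖(x : H)‖ ≤ ‖y‖ / c := by
    rw [le_div_iff₀' hc]
    exact mul_norm_le_norm_of_mul_sq_le_re_inner (hA.mul_sq_le_re_inner_vadd hM x)
  calc ‖A x‖ = ‖y - M x‖ := by simp [hy, LinearPMap.vadd_apply]
    _ ≤ ‖y‖ + ‖M‖ * ‖(x : H)‖ := (norm_sub_le _ _).trans (by gcongr; exact M.le_opNorm _)
    _ ≤ ‖y‖ + ‖M‖ * (‖y‖ / c) := by gcongr
    _ = (1 + ‖M‖ / c) * ‖y‖ := by ring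

end IsSkewSelfAdjoint

section Compression

variable {A : H →ₗ.[𝕜] H} {K : Submodule 𝕜 H}

/-- The compression `ι_K* A ι_K` of a partially defined operator `A` to a subspace `K` contained in
its domain, as an everywhere defined operator on `K`. -/
noncomputable def compression (A : H →ₗ.[𝕜] H) {K : Submodule 𝕜 H} [K.HasOrthogonalProjection]
    (hK : K ≤ A.domain) : K →ₗ[𝕜] K :=
  K.orthogonalProjectionOnto.toLinearMap ∘ₗ A.toFun ∘ₗ Submodule.inclusion hK

theorem compression_apply [K.HasOrthogonalProjection] (hK : K ≤ A.domain) (x : K) :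
    compression A hK x = K.orthogonalProjectionOnto (A ⟨x, hK x.2⟩) := rfl

theorem compression_vadd_apply [K.HasOrthogonalProjection] (hK : K ≤ A.domain) (M : H →L[𝕜] H)
    (x : K) : compression ((M : H →ₗ[𝕜] H) +ᵥ A) hK x =
      K.orthogonalProjectionOnto (M x) + compression A hK x := by
  rw [compression_apply, LinearPMap.vadd_apply, map_add]
  rfl

theorem re_inner_compression_self [K.HasOrthogonalProjection] (hK : K ≤ A.domain) (x : K) :
    RCLike.re ⟪compression A hK x, x⟫_𝕜 = RCLike.re ⟪A ⟨x, hK x.2⟩, (x : H)⟫_𝕜 := by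
  rw [compression_apply, Submodule.inner_orthogonalProjectionOnto_eq_of_mem_right]

theorem exists_inverse_compression [CompleteSpace H] [CompleteSpace K] (hA : A.IsClosed)
    (hK : K ≤ A.domain) {c : ℝ} (hc : 0 < c)
    (hcoer : ∀ x : K, c * ‖x‖ ^ 2 ≤ RCLike.re ⟪A ⟨x, hK x.2⟩, (x : H)⟫_𝕜) :
    ∃ S : K →L[𝕜] K, ‖S‖ ≤ c⁻¹ ∧ Function.LeftInverse S (compression A hK) ∧
      Function.RightInverse S (compression A hK) := by
  have hcomp (x : K) : c * ‖x‖ ^ 2 ≤ RCLike.re ⟪compression A hK x, x⟫_𝕜 :=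
    (hcoer x).trans_eq (re_inner_compression_self hK x).symm
  let T : K →L[𝕜] K := ⟨compression A hK,
    K.orthogonalProjectionOnto.continuous.comp (continuous_comp_inclusion_of_isClosed hA hK)⟩
  have hT : IsUnit T := T.isUnit_of_forall_le_norm_inner_map (c := ⟨c, hc.le⟩) hc fun x =>
    (mul_comm _ _).trans_le ((hcomp x).trans (RCLike.re_le_norm _))
  exact exists_continuous_inverse_of_le_norm hc
    (fun x => mul_norm_le_norm_of_mul_sq_le_re_inner (hcomp x))
    (ContinuousLinearMap.isUnit_iff_bijective.1 hT).2

theorem norm_le_mul_norm_of_compression_leftInverse [K.HasOrthogonalProjection] {J : K →L[𝕜] K}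
    {C : ℝ} (hJ : ‖J‖ ≤ C)
    (hleft : ∀ (x : A.domain) (hx : (x : H) ∈ K), J (K.orthogonalProjectionOnto (A x)) = ⟨x, hx⟩)
    (x : A.domain) (hx : (x : H) ∈ K) : ‖(x : H)‖ ≤ C * ‖A x‖ :=
  calc ‖(x : H)‖ = ‖J (K.orthogonalProjectionOnto (A x))‖ := by rw [hleft x hx]; rfl
    _ ≤ ‖J‖ * ‖K.orthogonalProjectionOnto (A x)‖ := J.le_opNorm _
    _ ≤ C * ‖A x‖ := by
      gcongr
      · exact (norm_nonneg J).trans hJ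
      · exact K.norm_orthogonalProjectionOnto_apply_le _

end Compression

/-- `K` reduces `A` if `π_K A ⊆ A π_K`, where `π_K` is the orthogonal projection: it maps `dom A`
into itself and commutes with `A` there. -/
def Reduces (K : Submodule 𝕜 H) [K.HasOrthogonalProjection] (A : H →ₗ.[𝕜] H) : Prop :=
  ∀ x : A.domain, ∃ hx : (K.orthogonalProjectionOnto (x : H) : H) ∈ A.domain,
    (K.orthogonalProjectionOnto (A x) : H) = A ⟨K.orthogonalProjectionOnto (x : H), hx⟩

namespace Reduces

variable {K : Submodule 𝕜 H} {A : H →ₗ.[𝕜] H}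

theorem smul [K.HasOrthogonalProjection] (hA : Reduces K A) (a : 𝕜) :
    Reduces K (a • A) := fun x => by
  obtain ⟨hx, hAx⟩ := hA x
  exact ⟨hx, by rw [LinearPMap.smul_apply, LinearPMap.smul_apply, map_smul, K.coe_smul, hAx]⟩

theorem norm_orthogonalProjectionOnto_le [K.HasOrthogonalProjection] (hA : Reduces K A) {C : ℝ}
    (hC : 0 ≤ C) (hbelow : ∀ x : A.domain, (x : H) ∈ K → ‖(x : H)‖ ≤ C * ‖A x‖) (x : A.domain) :
    ‖K.orthogonalProjectionOnto (x : H)‖ ≤ C * ‖A x‖ := by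
  obtain ⟨hx, hAx⟩ := hA x
  calc ‖K.orthogonalProjectionOnto (x : H)‖
      ≤ C * ‖(K.orthogonalProjectionOnto (A x) : H)‖ := hAx ▸ hbelow ⟨_, hx⟩ (SetLike.coe_mem _)
    _ ≤ C * ‖A x‖ := by gcongr; exact K.norm_orthogonalProjectionOnto_apply_le _

theorem compression_orthogonalProjectionOnto [K.HasOrthogonalProjection] (hA : Reduces Kᗮ A)
    (hK : K ≤ A.domain) (x : A.domain) :
    compression A hK (K.orthogonalProjectionOnto (x : H)) = K.orthogonalProjectionOnto (A x) := by
  obtain ⟨hx, hAx⟩ := hA x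
  have hsplit : x = ⟨K.orthogonalProjectionOnto (x : H), hK (SetLike.coe_mem _)⟩ +
      ⟨Kᗮ.orthogonalProjectionOnto (x : H), hx⟩ :=
    Subtype.ext (K.starProjection_add_starProjection_orthogonal (x : H)).symm
  have hzero : K.orthogonalProjectionOnto (A ⟨Kᗮ.orthogonalProjectionOnto (x : H), hx⟩) = 0 := by
    rw [← hAx]
    exact K.orthogonalProjectionOnto_apply_of_mem_orthogonal (SetLike.coe_mem _)
  conv_rhs => rw [hsplit, LinearPMap.map_add, map_add, hzero, add_zero]
  rfl

theorem sub_leftInverse_compression_vadd [K.HasOrthogonalProjection] (hA : Reduces Kᗮ A)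
    (hK : K ≤ A.domain) (M : H →L[𝕜] H) {S : K →L[𝕜] K}
    (hS : Function.LeftInverse S (compression ((M : H →ₗ[𝕜] H) +ᵥ A) hK)) (x : A.domain) :
    (x : H) - S (K.orthogonalProjectionOnto (((M : H →ₗ[𝕜] H) +ᵥ A) x)) =
      Kᗮ.orthogonalProjectionOnto (x : H) -
        S (K.orthogonalProjectionOnto (M (Kᗮ.orthogonalProjectionOnto (x : H)))) := by
  have hsplit : (x : H) =
      K.orthogonalProjectionOnto (x : H) + Kᗮ.orthogonalProjectionOnto (x : H) :=
    (K.starProjection_add_starProjection_orthogonal (x : H)).symm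
  have hMx : M x = M (K.orthogonalProjectionOnto (x : H)) +
      M (Kᗮ.orthogonalProjectionOnto (x : H)) := by rw [← map_add, ← hsplit]
  have hblock : K.orthogonalProjectionOnto (((M : H →ₗ[𝕜] H) +ᵥ A) x) =
      compression ((M : H →ₗ[𝕜] H) +ᵥ A) hK (K.orthogonalProjectionOnto (x : H)) +
        K.orthogonalProjectionOnto (M (Kᗮ.orthogonalProjectionOnto (x : H))) := by
    rw [compression_vadd_apply, hA.compression_orthogonalProjectionOnto hK x,
      LinearPMap.vadd_apply, ContinuousLinearMap.coe_coe, hMx]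
    simp only [map_add]
    abel
  rw [hblock, map_add, hS, Submodule.coe_add]
  nth_rw 1 [hsplit]
  abel

end Reduces

theorem IsSkewSelfAdjoint.norm_inverse_sub_inverse_compression_le [CompleteSpace H]
    {A : H →ₗ.[𝕜] H} (hA : IsSkewSelfAdjoint A) {M : H →L[𝕜] H} {c : ℝ} (hc : 0 < c)
    (hM : ∀ x, c * ‖x‖ ^ 2 ≤ RCLike.re ⟪M x, x⟫_𝕜) {K : Submodule 𝕜 H} [K.HasOrthogonalProjection]
    (hK : K ≤ A.domain) (hred : Reduces Kᗮ A) {C : ℝ} (hC : 0 ≤ C)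
    (hbelow : ∀ x : A.domain, (x : H) ∈ Kᗮ → ‖(x : H)‖ ≤ C * ‖A x‖)
    {S : H →L[𝕜] H} (hS : ∀ x : A.domain, S (((M : H →ₗ[𝕜] H) +ᵥ A) x) = x)
    {S_K : K →L[𝕜] K} (hS_K_norm : ‖S_K‖ ≤ c⁻¹)
    (hS_K : Function.LeftInverse S_K (compression ((M : H →ₗ[𝕜] H) +ᵥ A) hK)) :
    ‖S - K.subtypeL.comp (S_K.comp K.orthogonalProjectionOnto)‖ ≤ C * (1 + ‖M‖ / c) ^ 2 := by
  refine ContinuousLinearMap.opNorm_le_bound _ (by positivity) fun y => ?_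
  obtain ⟨x, rfl⟩ := hA.surjective_vadd hc hM y
  set y := ((M : H →ₗ[𝕜] H) +ᵥ A) x
  set r := Kᗮ.orthogonalProjectionOnto (x : H) with hr
  have hdiff : (S - K.subtypeL.comp (S_K.comp K.orthogonalProjectionOnto)) y =
      r - S_K (K.orthogonalProjectionOnto (M r)) := by
    rw [hr, ← hred.sub_leftInverse_compression_vadd hK M hS_K x, ← hS x]
    rfl
  have hr_le : ‖r‖ ≤ C * ((1 + ‖M‖ / c) * ‖y‖) :=
    (hred.norm_orthogonalProjectionOnto_le hC hbelow x).trans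
      (mul_le_mul_of_nonneg_left (hA.norm_apply_le hc hM x) hC)
  have hS_K_le : ‖S_K (K.orthogonalProjectionOnto (M r))‖ ≤ c⁻¹ * (‖M‖ * ‖r‖) := by
    refine S_K.le_of_opNorm_le_of_le hS_K_norm ?_
    exact (K.norm_orthogonalProjectionOnto_apply_le _).trans (M.le_opNorm _)
  calc _ = ‖(r : H) - S_K (K.orthogonalProjectionOnto (M r))‖ := by rw [hdiff]
    _ ≤ ‖r‖ + c⁻¹ * (‖M‖ * ‖r‖) := norm_sub_le_of_le le_rfl hS_K_le
    _ = (1 + ‖M‖ / c) * ‖r‖ := by ring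
    _ ≤ (1 + ‖M‖ / c) * (C * ((1 + ‖M‖ / c) * ‖y‖)) := by gcongr
    _ = C * (1 + ‖M‖ / c) ^ 2 * ‖y‖ := by ring

theorem statement7_general [CompleteSpace H] (M : H →L[𝕜] H) {c : ℝ} (hc : 0 < c)
    (hM : ∀ x, c * ‖x‖ ^ 2 ≤ RCLike.re ⟪M x, x⟫_𝕜) {A : H →ₗ.[𝕜] H} (hA : IsSkewSelfAdjoint A)
    {N : Submodule 𝕜 H} [CompleteSpace N] (hN : N ≤ A.domain) (hred : Reduces Nᗮ A)
    {C : ℝ} (hC : 0 ≤ C) (hbelow : ∀ x : A.domain, (x : H) ∈ Nᗮ → ‖(x : H)‖ ≤ C * ‖A x‖)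
    {ε : ℝ} (hε : 0 < ε) :
    ∃ (Binv : H →L[𝕜] H) (JN : N →L[𝕜] N),
      (∀ x : A.domain, Binv (M x + ((ε⁻¹ : ℝ) : 𝕜) • A x) = x) ∧
      (∀ y : H, ∃ x : A.domain, M x + ((ε⁻¹ : ℝ) : 𝕜) • A x = y) ∧
      (∀ x : N, JN (N.orthogonalProjectionOnto (M x) +
        ((ε⁻¹ : ℝ) : 𝕜) • N.orthogonalProjectionOnto (A ⟨x, hN x.2⟩)) = x) ∧
      (∀ y : N, ∃ x : N, N.orthogonalProjectionOnto (M x) +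
        ((ε⁻¹ : ℝ) : 𝕜) • N.orthogonalProjectionOnto (A ⟨x, hN x.2⟩) = y) ∧
      ‖Binv - N.subtypeL.comp (JN.comp N.orthogonalProjectionOnto)‖ ≤
        C * (1 + ‖M‖ / c) ^ 2 * ε := by
  set t : 𝕜 := ((ε⁻¹ : ℝ) : 𝕜) with ht
  have htA : IsSkewSelfAdjoint (t • A) := hA.ofReal_smul (inv_ne_zero hε.ne')
  have hcomp (x : N) : compression ((M : H →ₗ[𝕜] H) +ᵥ t • A) hN x =
      N.orthogonalProjectionOnto (M x) + t • N.orthogonalProjectionOnto (A ⟨x, hN x.2⟩) := by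
    rw [compression_vadd_apply, compression_apply, LinearPMap.smul_apply, map_smul]
  have hbelow_smul (x : A.domain) (hx : (x : H) ∈ Nᗮ) : ‖(x : H)‖ ≤ C * ε * ‖(t • A) x‖ := by
    rw [LinearPMap.smul_apply, norm_smul, ht, RCLike.norm_ofReal, abs_of_pos (inv_pos.2 hε),
      mul_assoc, mul_inv_cancel_left₀ hε.ne']
    exact hbelow x hx
  obtain ⟨Binv, hBinv⟩ := htA.exists_leftInverse_vadd hc hM
  obtain ⟨JN, hJN_norm, hJN, hJN_right⟩ := exists_inverse_compression
    (isClosed_vadd htA.isClosed M) hN hc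
    fun x => htA.mul_sq_le_re_inner_vadd hM ⟨x, hN x.2⟩
  refine ⟨Binv, JN, hBinv, htA.surjective_vadd hc hM, fun x => hcomp x ▸ hJN x,
    fun y => ⟨JN y, (hcomp _).symm.trans (hJN_right y)⟩, ?_⟩
  rw [mul_right_comm]
  exact htA.norm_inverse_sub_inverse_compression_le hc hM hN (hred.smul t) (by positivity)
    hbelow_smul hBinv hJN_norm hJN

end InnerProductSpace

/-- Under Hypothesis (H), for every `ε ∈ (0, 1/(2 C_R ‖M‖))` the operator
`B_ε = M + ε⁻¹ A` is boundedly invertible and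
`‖B_ε⁻¹ − ι_N B_{ε,N}⁻¹ ι_N*‖ ≤ 2 C_R (1 + ‖M‖/c)² ε`. -/
theorem statement7
    {H : Type*} [NormedAddCommGroup H] [InnerProductSpace ℂ H] [CompleteSpace H]
    -- `M` is a bounded operator with `Re⟪M x, x⟫ ≥ c ‖x‖²`, `c > 0`
    (M : H →L[ℂ] H) (c : ℝ) (hc : 0 < c)
    (hM : ∀ x : H, c * ‖x‖ ^ 2 ≤ (inner ℂ (M x) x : ℂ).re)
    -- `A` is densely defined and skew-selfadjoint
    (A : H →ₗ.[ℂ] H) (hA_dense : Dense (A.domain : Set H)) (hA_skew : A.adjoint = -A)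
    -- `N` is a closed subspace, `R = Nᗮ`
    (N : Submodule ℂ H) [CompleteSpace N]
    (C_R : ℝ) (hC_R : 0 < C_R)
    -- Hypothesis (H)(a): `N ⊆ dom A` and `A π_N` is bounded
    (hHa_sub : N ≤ A.domain)
    (hHa_bdd : ∃ Ca : ℝ, ∀ x : A.domain, (x : H) ∈ N → ‖A x‖ ≤ Ca * ‖(x : H)‖)
    -- Hypothesis (H)(b): `π_R A ⊆ A π_R`
    (hHb : ∀ x : A.domain,
      ∃ hx : ((Submodule.orthogonalProjectionOnto Nᗮ (x : H) : H)) ∈ A.domain,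
        (Submodule.orthogonalProjectionOnto Nᗮ (A x) : H)
          = A ⟨(Submodule.orthogonalProjectionOnto Nᗮ (x : H) : H), hx⟩)
    -- Hypothesis (H)(c): the compression `ι_R* A ι_R`, with domain `dom(A) ∩ R`, is a
    -- bijection onto `R` with bounded inverse of norm at most `C_R`
    (hHc : ∃ J : Nᗮ →L[ℂ] Nᗮ, ‖J‖ ≤ C_R ∧
      (∀ (x : A.domain) (hx : (x : H) ∈ Nᗮ),
        J (Submodule.orthogonalProjectionOnto Nᗮ (A x)) = ⟨(x : H), hx⟩) ∧
      (∀ y : Nᗮ, ∃ (x : A.domain) (hx : (x : H) ∈ Nᗮ),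
        Submodule.orthogonalProjectionOnto Nᗮ (A x) = y))
    (ε : ℝ) (hε : ε ∈ Set.Ioo (0 : ℝ) (1 / (2 * C_R * ‖M‖))) :
    ∃ (Binv : H →L[ℂ] H) (JN : N →L[ℂ] N),
      -- `Binv` is the bounded inverse of `B_ε = M + ε⁻¹ A`
      (∀ x : A.domain, Binv (M (x : H) + ε⁻¹ • A x) = x) ∧
      (∀ y : H, ∃ x : A.domain, M (x : H) + ε⁻¹ • A x = y) ∧
      -- `JN` is the bounded inverse of `B_{ε,N} = ι_N* M ι_N + ε⁻¹ ι_N* A ι_N` on `N`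
      (∀ x : N,
        JN (Submodule.orthogonalProjectionOnto N (M (x : H))
            + ε⁻¹ • Submodule.orthogonalProjectionOnto N (A ⟨(x : H), hHa_sub x.2⟩)) = x) ∧
      (∀ y : N, ∃ x : N,
        Submodule.orthogonalProjectionOnto N (M (x : H))
            + ε⁻¹ • Submodule.orthogonalProjectionOnto N (A ⟨(x : H), hHa_sub x.2⟩) = y) ∧
      -- the estimate `‖B_ε⁻¹ − ι_N B_{ε,N}⁻¹ ι_N*‖ ≤ 2 C_R (1 + ‖M‖/c)² ε`
      ‖Binv - N.subtypeL.comp (JN.comp (Submodule.orthogonalProjectionOnto N))‖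
        ≤ 2 * C_R * (1 + ‖M‖ / c) ^ 2 * ε := by
  obtain ⟨J, hJ_norm, hJ, -⟩ := hHc
  obtain ⟨Binv, JN, hBinv, hB, hJN, hB_N, hestimate⟩ := statement7_general M hc hM
    ⟨hA_dense, hA_skew⟩ hHa_sub hHb hC_R.le (norm_le_mul_norm_of_compression_leftInverse hJ_norm hJ)
    hε.1
  have hε_pos := hε.1
  exact ⟨Binv, JN, hBinv, hB, hJN, hB_N, hestimate.trans (by gcongr; linarith)⟩
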